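/- arXiv:2011.05792 — 3 statements merged into one kernel-verified Lean document; each statement's English description precedes it below -/
import Mathlib

section
/- Let φ : X → Y be a continuous, open and closed surjection of topological spaces with X Hausdorff, and let m ≥ 1 be a natural number such that for every y ∈ Y the fiber φ⁻¹(y) has exactly m elements. Then φ is a covering map. -/
/-!
Separate the points `e` of the fiber over `y` by disjoint open sets `V e`. As `φ` is open, every
`V e` meets the fibers over all points near `y`. If these fibers have no more points than the fiber
over `y`, the pigeonhole principle puts exactly one of their points in each `V e` and none outside,
so over a neighborhood of `y` the sets `V e` are the sheets of `φ`.
-/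

open Filter Function Set Topology

theorem exists_range_eq_and_forall_inter_eq_singleton {α ι : Type*} [Finite ι] {V : ι → Set α}
    {F : Set α} (hdisj : Pairwise (Disjoint on V)) (hmeet : ∀ i, (V i ∩ F).Nonempty)
    (hcard : F.encard ≤ ENat.card ι) :
    ∃ g : ι → α, range g = F ∧ ∀ i, V i ∩ F = {g i} := by
  choose g hgV hgF using hmeet
  have eq_of_mem {i j : ι} (hij : g i ∈ V j) : i = j :=
    hdisj.eq (not_disjoint_iff.2 ⟨g i, hgV i, hij⟩)
  have g_injective : Injective g := fun i j hij ↦ eq_of_mem (hij ▸ hgV j)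
  have range_eq : range g = F :=
    (finite_range g).eq_of_subset_of_encard_le (range_subset_iff.2 hgF)
      (hcard.trans g_injective.encard_range)
  refine ⟨g, range_eq, fun i ↦ Subset.antisymm ?_ (singleton_subset_iff.2 ⟨hgV i, hgF i⟩)⟩
  rintro z ⟨hzV, hzF⟩
  obtain ⟨j, rfl⟩ := range_eq.ge hzF
  rw [eq_of_mem hzV, mem_singleton_iff]

theorem eventually_le_of_upperSemicontinuousAt {α : Type*} [TopologicalSpace α] {f : α → ℕ∞} {a : α}
    (hf : UpperSemicontinuousAt f a) (ha : f a ≠ ⊤) : ∀ᶠ z in 𝓝 a, f z ≤ f a := by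
  filter_upwards [hf (f a + 1) ((ENat.lt_add_one_iff ha).2 le_rfl)] with z hz
  exact (ENat.lt_add_one_iff ha).1 hz

section

variable {X Y : Type*} [TopologicalSpace X] {φ : X → Y}

theorem t2Space_fiber_of_isSeparatedMap (hsep : IsSeparatedMap φ) (y : Y) :
    T2Space (φ ⁻¹' {y}) :=
  (t2space_iff_isSeparatedMap y).2 fun a b _ ↦
    hsep.comp_right continuous_subtype_val Subtype.val_injective a b (a.2.trans b.2.symm)

theorem exists_isOpen_pairwise_disjoint_of_finite_fiber (hsep : IsSeparatedMap φ) {y : Y}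
    (hfin : (φ ⁻¹' {y}).Finite) :
    ∃ V : φ ⁻¹' {y} → Set X,
      (∀ e, e.1 ∈ V e ∧ IsOpen (V e)) ∧ Pairwise (Disjoint on V) := by
  have disjoint_nhds : (φ ⁻¹' {y}).PairwiseDisjoint 𝓝 := fun a ha b hb hab ↦
    isSeparatedMap_iff_disjoint_nhds.1 hsep a b (Eq.trans ha (Eq.symm hb)) hab
  obtain ⟨V, hV, hdisj⟩ := disjoint_nhds.exists_mem_filter_basis hfin nhds_basis_opens
  exact ⟨fun e ↦ V e, fun e ↦ hV e, hdisj.subtype⟩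

variable [TopologicalSpace Y]

theorem eventually_inter_fiber_nonempty (hopen : IsOpenMap φ) {x : X} {V : Set X} (hV : V ∈ 𝓝 x) :
    ∀ᶠ z in 𝓝 (φ x), (V ∩ φ ⁻¹' {z}).Nonempty :=
  hopen.image_mem_nhds hV

theorem isEvenlyCovered_of_bijOn {ι : Type*} [TopologicalSpace ι] [DiscreteTopology ι]
    (hcont : Continuous φ) (hopen : IsOpenMap φ) {y : Y} {U : Set Y} (hU : IsOpen U) (hy : y ∈ U)
    {V : ι → Set X} (hV : ∀ i, IsOpen (V i)) (hdisj : Pairwise (Disjoint on V))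
    (hbij : ∀ i, BijOn φ (V i) U) (hcover : φ ⁻¹' U ⊆ ⋃ i, V i) :
    IsEvenlyCovered φ y ι := by
  cases isEmpty_or_nonempty ι with
  | inl _ =>
    exact .of_preimage_eq_empty ι (hU.mem_nhds hy) (by simpa using hcover)
  | inr _ =>
    have : Nonempty X := ((hbij (Classical.arbitrary ι)).surjOn hy).nonempty
    have isOpen_iff (i : ι) {W : Set Y} (hWU : W ⊆ U) :
        IsOpen W ↔ IsOpen (φ ⁻¹' W ∩ V i) := by
      refine ⟨fun hW ↦ (hW.preimage hcont).inter (hV i), fun hW ↦ ?_⟩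
      have image_eq : φ '' (φ ⁻¹' W ∩ V i) = W := by
        rw [image_preimage_inter, (hbij i).image_eq, inter_eq_left.2 hWU]
      exact image_eq ▸ hopen _ hW
    exact .of_trivialization (t := hU.trivializationDiscrete V U isOpen_iff
      (fun i ↦ (hbij i).injOn) (fun i ↦ (hbij i).surjOn) hdisj hcover) hy

theorem isEvenlyCovered_of_upperSemicontinuousAt_encard_fiber (hcont : Continuous φ)
    (hopen : IsOpenMap φ) (hsep : IsSeparatedMap φ) {y : Y} (hfin : (φ ⁻¹' {y}).Finite)
    (hcard : UpperSemicontinuousAt (fun z ↦ (φ ⁻¹' {z}).encard) y) :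
    IsEvenlyCovered φ y (φ ⁻¹' {y}) := by
  have : Finite (φ ⁻¹' {y}) := hfin
  have : T2Space (φ ⁻¹' {y}) := t2Space_fiber_of_isSeparatedMap hsep y
  obtain ⟨V, hV, hdisj⟩ := exists_isOpen_pairwise_disjoint_of_finite_fiber hsep hfin
  have eventually_meet : ∀ᶠ z in 𝓝 y, ∀ e, (V e ∩ φ ⁻¹' {z}).Nonempty :=
    eventually_all.2 fun e ↦
      e.2 ▸ eventually_inter_fiber_nonempty hopen ((hV e).2.mem_nhds (hV e).1)
  have eventually_card_le : ∀ᶠ z in 𝓝 y, (φ ⁻¹' {z}).encard ≤ (φ ⁻¹' {y}).encard :=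
    eventually_le_of_upperSemicontinuousAt hcard (encard_ne_top_iff.2 hfin)
  obtain ⟨U, hUsub, hU, hyU⟩ := eventually_nhds_iff.1 (eventually_meet.and eventually_card_le)
  have exists_enum_fiber {z : Y} (hz : z ∈ U) :
      ∃ g : φ ⁻¹' {y} → X, range g = φ ⁻¹' {z} ∧ ∀ e, V e ∩ φ ⁻¹' {z} = {g e} :=
    exists_range_eq_and_forall_inter_eq_singleton hdisj (hUsub z hz).1 (hUsub z hz).2
  refine isEvenlyCovered_of_bijOn hcont hopen hU hyU (V := fun e ↦ V e ∩ φ ⁻¹' U)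
    (fun e ↦ (hV e).2.inter (hU.preimage hcont))
    (pairwise_disjoint_mono hdisj fun _ ↦ inter_subset_left)
    (fun e ↦ ⟨fun _ hx ↦ hx.2, ?injOn, ?surjOn⟩) ?cover
  case injOn =>
    intro a ha b hb hab
    obtain ⟨g, -, hg⟩ := exists_enum_fiber ha.2
    exact (hg e ▸ subsingleton_singleton : (V e ∩ φ ⁻¹' {φ a}).Subsingleton)
      ⟨ha.1, rfl⟩ ⟨hb.1, hab.symm⟩
  case surjOn =>
    intro z hz
    obtain ⟨x, hxV, rfl⟩ := (hUsub z hz).1 e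
    exact ⟨x, ⟨hxV, hz⟩, rfl⟩
  case cover =>
    intro x hx
    obtain ⟨g, hrange, hg⟩ := exists_enum_fiber hx
    obtain ⟨e, rfl⟩ := hrange.ge rfl
    exact mem_iUnion.2 ⟨e, ((hg e).ge rfl).1, hx⟩

theorem isCoveringMap_of_open_closed_constant_fiber_general (hcont : Continuous φ)
    (hopen : IsOpenMap φ) (hsep : IsSeparatedMap φ) (hfin : ∀ y, (φ ⁻¹' {y}).Finite)
    (hcard : UpperSemicontinuous fun y ↦ (φ ⁻¹' {y}).encard) :
    IsCoveringMap φ := fun y ↦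
  isEvenlyCovered_of_upperSemicontinuousAt_encard_fiber hcont hopen hsep (hfin y) (hcard y)

end

/-- An open and closed continuous surjection from a Hausdorff space all of whose fibers have
exactly `m ≥ 1` elements is a covering map. -/
theorem isCoveringMap_of_open_closed_constant_fiber
    {X Y : Type*} [TopologicalSpace X] [TopologicalSpace Y] [T2Space X]
    (φ : X → Y) (hcont : Continuous φ) (hopen : IsOpenMap φ) (hclosed : IsClosedMap φ)
    (hsurj : Function.Surjective φ) (m : ℕ) (hm : 1 ≤ m)
    (hfib : ∀ y : Y, (φ ⁻¹' {y}).encard = m) :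
    IsCoveringMap φ :=
  isCoveringMap_of_open_closed_constant_fiber_general hcont hopen (T2Space.isSeparatedMap φ)
    (fun y ↦ finite_of_encard_eq_coe (hfib y))
    (by simpa only [hfib] using upperSemicontinuous_const)
end

section
/- Let φ : X → Y be a continuous, open and closed surjection of topological spaces with X Hausdorff, let m ≥ 1 be a natural number, and let X₁ ⊆ X be a closed subset such that: (i) φ⁻¹(φ(X₁)) = X₁; (ii) for every x ∈ X ∖ X₁ the fiber φ⁻¹(φ(x)) has exactly m elements; and (iii) Y ∖ φ(X₁) is dense in Y. Then for every y ∈ Y the fiber φ⁻¹(y) has at most m elements. -/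
/-!
Disjoint open neighbourhoods of finitely many points of the fiber over `y` have open images
containing `y`, so every fiber over a point close to `y` meets each of these neighbourhoods. Hence
fiber cardinality is lower semicontinuous, and a bound on it extends from a dense set to all of `Y`.
-/

open Set Filter Topology

section FiberCardinality

variable {X Y : Type*}

theorem encard_le_encard_of_pairwiseDisjoint_of_inter_nonempty {ι : Type*} {s : Set ι}
    {U : ι → Set X} {F : Set X} (hU : s.PairwiseDisjoint U)
    (hne : ∀ i ∈ s, (U i ∩ F).Nonempty) : s.encard ≤ F.encard := by
  obtain rfl | ⟨i₀, hi₀⟩ := s.eq_empty_or_nonempty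
  · simp
  have : Nonempty X := ⟨(hne i₀ hi₀).some⟩
  choose! g hgU hgF using hne
  have hg : s.InjOn g := fun i hi j hj hij =>
    hU.elim_set hi hj (g i) (hgU i hi) (hij ▸ hgU j hj)
  exact encard_le_encard_of_injOn hgF hg

variable [TopologicalSpace X] [TopologicalSpace Y] [T2Space X] {φ : X → Y}

theorem eventually_encard_le_encard_fiber (hφ : IsOpenMap φ) {y : Y} {t : Set X}
    (ht : t.Finite) (hty : t ⊆ φ ⁻¹' {y}) :
    ∀ᶠ z in 𝓝 y, t.encard ≤ (φ ⁻¹' {z}).encard := by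
  obtain ⟨U, hU, hdisj⟩ := ht.t2_separation
  have hmeets : ∀ᶠ z in 𝓝 y, ∀ x ∈ t, z ∈ φ '' U x :=
    (eventually_all_finite ht).2 fun x hx =>
      (hφ _ (hU x).2).mem_nhds ⟨x, (hU x).1, hty hx⟩
  filter_upwards [hmeets] with z hz
  exact encard_le_encard_of_pairwiseDisjoint_of_inter_nonempty hdisj hz

theorem lowerSemicontinuous_encard_fiber (hφ : IsOpenMap φ) :
    LowerSemicontinuous fun y => (φ ⁻¹' {y}).encard := by
  intro y k hk
  obtain ⟨t, hty, htk⟩ := exists_subset_encard_eq (Order.add_one_le_of_lt hk)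
  have hlt : k < t.encard := htk ▸ (ENat.lt_add_one_iff hk.ne_top).2 le_rfl
  have ht : t.Finite := by
    rw [← encard_lt_top_iff, htk]
    exact ENat.add_lt_top.2 ⟨hk.lt_top, ENat.one_lt_top⟩
  exact (eventually_encard_le_encard_fiber hφ ht hty).mono fun _ => hlt.trans_le

theorem fiber_card_le_of_dense_regular_values_general (hφ : IsOpenMap φ) {D : Set Y}
    (hD : Dense D) {m : ℕ∞} (hm : ∀ y ∈ D, (φ ⁻¹' {y}).encard ≤ m) (y : Y) :
    (φ ⁻¹' {y}).encard ≤ m := by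
  have hclosed : IsClosed {z | (φ ⁻¹' {z}).encard ≤ m} :=
    (lowerSemicontinuous_encard_fiber hφ).isClosed_preimage m
  exact closure_minimal hm hclosed (hD y)

end FiberCardinality

/-- Let `φ : X → Y` be a continuous, open and closed surjection with `X` Hausdorff, and let
`X₁ ⊆ X` be a closed subset saturated for `φ` (i.e. `φ⁻¹(φ(X₁)) = X₁`) such that every fiber
over the complement of `φ(X₁)` has exactly `m ≥ 1` elements, and such that `Y ∖ φ(X₁)` is
dense in `Y`.  Then every fiber of `φ` has at most `m` elements. -/
theorem fiber_card_le_of_dense_regular_values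
    {X Y : Type*} [TopologicalSpace X] [TopologicalSpace Y] [T2Space X]
    (φ : X → Y) (hcont : Continuous φ) (hopen : IsOpenMap φ) (hclosed : IsClosedMap φ)
    (hsurj : Function.Surjective φ) (m : ℕ) (hm : 1 ≤ m)
    (X₁ : Set X) (hX₁ : IsClosed X₁) (hsat : φ ⁻¹' (φ '' X₁) = X₁)
    (hfib : ∀ x ∉ X₁, (φ ⁻¹' {φ x}).encard = m)
    (hdense : Dense ((φ '' X₁)ᶜ : Set Y)) :
    ∀ y : Y, (φ ⁻¹' {y}).encard ≤ m :=
  fiber_card_le_of_dense_regular_values_general hopen hdense <|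
    hsurj.forall.2 fun x hx => (hfib x fun hxX₁ => hx (mem_image_of_mem φ hxX₁)).le
end

section
/- Let g ≥ 2 be a natural number and x₀ ∈ ℝ. For each i ∈ {1, …, 2g−2}, let f_i, g_i : ℝ → ℝ be orientation-preserving homeomorphisms (continuous strictly increasing bijections of ℝ) satisfying f_i(x+1) = f_i(x) + 1 and g_i(x+1) = g_i(x) + 1 for all x ∈ ℝ, and with f_i(x₀) − x₀ ∈ [0,1) and g_i(x₀) − x₀ ∈ [0,1). Then the integer (Σ_{i=1}^{2g−2} ⌊g_i(f_i(x₀)) − x₀⌋) − (g − 1) lies in the interval [−(g−1), g−1], i.e. it belongs to {−g+1, …, g−1}. -/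
open scoped BigOperators

open Set

theorem floor_map_sub_mem_Icc_zero_one {R : Type*} [Ring R] [LinearOrder R] [IsOrderedRing R]
    [FloorRing R] {h : R → R} (hmono : Monotone h) {x₀ y : R} (hadd : h (x₀ + 1) = h x₀ + 1)
    (hnorm : h x₀ - x₀ ∈ Ico 0 1) (hy : y - x₀ ∈ Icc 0 1) :
    ⌊h y - x₀⌋ ∈ Icc 0 1 := by
  have hlower : 0 ≤ h y - x₀ := calc
    0 ≤ h x₀ - x₀ := hnorm.1
    _ ≤ h y - x₀ := sub_le_sub_right (hmono (sub_nonneg.mp hy.1)) x₀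
  have hupper : h y - x₀ < 1 + 1 := calc
    h y - x₀ ≤ h (x₀ + 1) - x₀ := sub_le_sub_right (hmono (sub_le_iff_le_add'.mp hy.2)) x₀
    _ = h x₀ - x₀ + 1 := by rw [hadd, add_sub_right_comm]
    _ < 1 + 1 := add_lt_add_left hnorm.2 1
  exact ⟨Int.floor_nonneg.mpr hlower,
    Int.lt_add_one_iff.mp (Int.floor_lt.mpr (by exact_mod_cast hupper))⟩

theorem sum_mem_Icc_zero_card {ι R : Type*} [AddCommMonoidWithOne R] [PartialOrder R]
    [IsOrderedAddMonoid R] {s : Finset ι} {a : ι → R} (ha : ∀ i ∈ s, a i ∈ Icc 0 1) :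
    ∑ i ∈ s, a i ∈ Icc 0 (s.card : R) :=
  ⟨Finset.sum_nonneg fun i hi => (ha i hi).1,
    by simpa only [nsmul_one] using s.sum_le_card_nsmul a 1 fun i hi => (ha i hi).2⟩

/-- For the cocycle, `y i` is `Fᵢ(x₀)` and `m` is the shift `g − 1`. -/
theorem cocycle_value_bound_general {ι R : Type*} [Fintype ι]
    [Ring R] [LinearOrder R] [IsOrderedRing R] [FloorRing R]
    {m : ℤ} (hcard : (Fintype.card ι : ℤ) = 2 * m) {x₀ : R} {y : ι → R} {G : ι → R → R}
    (hmono : ∀ i, Monotone (G i)) (hadd : ∀ i, G i (x₀ + 1) = G i x₀ + 1)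
    (hy : ∀ i, y i - x₀ ∈ Icc 0 1) (hnorm : ∀ i, G i x₀ - x₀ ∈ Ico 0 1) :
    (∑ i, ⌊G i (y i) - x₀⌋) - m ∈ Icc (-m) m := by
  have hsum : ∑ i, ⌊G i (y i) - x₀⌋ ∈ Icc 0 (Fintype.card ι : ℤ) :=
    sum_mem_Icc_zero_card fun i _ =>
      floor_map_sub_mem_Icc_zero_one (hmono i) (hadd i) (hnorm i) (hy i)
  rw [hcard] at hsum
  exact ⟨by linarith [hsum.1], by linarith [hsum.2]⟩

/-- Let `g ≥ 2` and for `1 ≤ i ≤ 2g−2` let `Fᵢ, Gᵢ : ℝ → ℝ` be orientation-preserving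
homeomorphisms of the line commuting with the unit translation (lifts of circle
homeomorphisms), normalized at a basepoint `x₀` so that `Fᵢ(x₀) − x₀ ∈ [0,1)` and
`Gᵢ(x₀) − x₀ ∈ [0,1)`.  Then the integer `(Σᵢ ⌊Gᵢ(Fᵢ(x₀)) − x₀⌋) − (g − 1)` lies in
`{−g+1, …, g−1}`. -/
theorem cocycle_value_bound
    (g : ℕ) (hg : 2 ≤ g) (x₀ : ℝ) (F G : Fin (2 * g - 2) → ℝ → ℝ)
    (hFc : ∀ i, Continuous (F i)) (hFm : ∀ i, StrictMono (F i))
    (hFb : ∀ i, Function.Bijective (F i))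
    (hGc : ∀ i, Continuous (G i)) (hGm : ∀ i, StrictMono (G i))
    (hGb : ∀ i, Function.Bijective (G i))
    (hF1 : ∀ i, ∀ x : ℝ, F i (x + 1) = F i x + 1)
    (hG1 : ∀ i, ∀ x : ℝ, G i (x + 1) = G i x + 1)
    (hF0 : ∀ i, F i x₀ - x₀ ∈ Set.Ico (0 : ℝ) 1)
    (hG0 : ∀ i, G i x₀ - x₀ ∈ Set.Ico (0 : ℝ) 1) :
    (∑ i, ⌊G i (F i x₀) - x₀⌋) - ((g : ℤ) - 1) ∈
      Set.Icc (-((g : ℤ) - 1)) ((g : ℤ) - 1) := by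
  exact cocycle_value_bound_general (by rw [Fintype.card_fin]; omega)
    (fun i => (hGm i).monotone) (fun i => hG1 i x₀) (fun i => Ico_subset_Icc_self (hF0 i)) hG0
end
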